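/- Let 𝔥 be a separable complex Hilbert space of dimension greater than two and let d be a tracially bounded decoherence functional for 𝔥. Then there exists a unique bounded linear operator 𝔐 on 𝔥 ⊗ 𝔥 such that d(p,q) = tr(𝔐(p ⊗ q)) whenever p and q are finite rank projections on 𝔥. -/

import Mathlib

/- Common background definitions: decoherence functionals on the projection
lattice of a complex Hilbert space, boundedness/additivity notions, trace class
operators, and an axiomatisation of the Hilbert space tensor product
`𝔥 ⊗ 𝔥` together with the operator tensor product. -/

noncomputable section

open scoped ComplexInnerProductSpace ComplexOrder
open ContinuousLinearMap

universe u

variable {E : Type u} [NormedAddCommGroup E] [InnerProductSpace ℂ E] [CompleteSpace E]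
variable {G : Type u} [NormedAddCommGroup G] [InnerProductSpace ℂ G] [CompleteSpace G]

/-- `p` is an orthogonal projection on a Hilbert space. -/
def IsOrthoProj (p : E →L[ℂ] E) : Prop :=
  IsIdempotentElem p ∧ IsSelfAdjoint p

/-- `p` is an operator of finite rank. -/
def HasFiniteRank (p : E →L[ℂ] E) : Prop :=
  FiniteDimensional ℂ ↥(LinearMap.range (p : E →ₗ[ℂ] E))

/-- A decoherence functional on the lattice of projections `P(𝔥)`
(modelled as a function on all pairs of bounded operators whose defining
properties refer only to its values at pairs of orthogonal projections). -/
structure IsDecoherenceFunctional (d : (E →L[ℂ] E) → (E →L[ℂ] E) → ℂ) : Prop where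
  hermitian : ∀ p q, IsOrthoProj p → IsOrthoProj q → d p q = starRingEnd ℂ (d q p)
  pos : ∀ p, IsOrthoProj p → 0 ≤ d p p
  normalized : d 1 1 = 1
  orthoadd : ∀ p₁ p₂ q, IsOrthoProj p₁ → IsOrthoProj p₂ → IsOrthoProj q →
    p₁ * p₂ = 0 → d (p₁ + p₂) q = d p₁ q + d p₂ q

/-- A decoherence functional is bounded if `{|d(p,q)|}` is a bounded set. -/
def DFBounded (d : (E →L[ℂ] E) → (E →L[ℂ] E) → ℂ) : Prop :=
  ∃ C : ℝ, ∀ p q, IsOrthoProj p → IsOrthoProj q → ‖d p q‖ ≤ C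

/-- Countable additivity of a decoherence functional: for every countable
pairwise orthogonal family of projections summing (strongly) to `P`,
`d (P, q) = ∑ d (pᵢ, q)`. -/
def DFCountablyAdditive (d : (E →L[ℂ] E) → (E →L[ℂ] E) → ℂ) : Prop :=
  ∀ (p : ℕ → E →L[ℂ] E) (P q : E →L[ℂ] E),
    (∀ i, IsOrthoProj (p i)) → IsOrthoProj P → IsOrthoProj q →
    (∀ i j, i ≠ j → p i * p j = 0) →
    (∀ x : E, HasSum (fun i => p i x) (P x)) →
    HasSum (fun i => d (p i) q) (d P q)

/-- Complete additivity of a decoherence functional. -/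
def DFCompletelyAdditive (d : (E →L[ℂ] E) → (E →L[ℂ] E) → ℂ) : Prop :=
  ∀ (ι : Type u) (p : ι → E →L[ℂ] E) (P q : E →L[ℂ] E),
    (∀ i, IsOrthoProj (p i)) → IsOrthoProj P → IsOrthoProj q →
    (∀ i j, i ≠ j → p i * p j = 0) →
    (∀ x : E, HasSum (fun i => p i x) (P x)) →
    HasSum (fun i => d (p i) q) (d P q)

/-- A bilinear form `D` on `B(𝔥) × B(𝔥)` is bounded. -/
def IsBoundedBilinear (D : (E →L[ℂ] E) →ₗ[ℂ] (E →L[ℂ] E) →ₗ[ℂ] ℂ) : Prop :=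
  ∃ C : ℝ, ∀ x y : E →L[ℂ] E, ‖D x y‖ ≤ C * ‖x‖ * ‖y‖

/-- The bilinear form `D` extends the decoherence functional `d`. -/
def ExtendsDF (D : (E →L[ℂ] E) →ₗ[ℂ] (E →L[ℂ] E) →ₗ[ℂ] ℂ)
    (d : (E →L[ℂ] E) → (E →L[ℂ] E) → ℂ) : Prop :=
  ∀ p q, IsOrthoProj p → IsOrthoProj q → D p q = d p q

/-- `T` is a trace class operator (via the standard characterisation: the sums
`∑ |⟪eᵢ, T fᵢ⟫|` over finite orthonormal families are uniformly bounded). -/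
def IsTraceClass (T : E →L[ℂ] E) : Prop :=
  ∃ C : ℝ, ∀ (n : ℕ) (e f : Fin n → E), Orthonormal ℂ e → Orthonormal ℂ f →
    ∑ i, ‖⟪e i, T (f i)⟫‖ ≤ C

/-- The trace of an operator computed in the Hilbert basis `b` (for a trace
class operator this is basis independent and is the usual trace). -/
def traceAlong {ι : Type*} (b : HilbertBasis ι ℂ E) (T : E →L[ℂ] E) : ℂ :=
  ∑' i, ⟪b i, T (b i)⟫

/-- The rank one orthogonal projection `p_ξ` onto the span of a unit vector `ξ`. -/
def rankOneProj (ξ : E) : E →L[ℂ] E :=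
  (innerSL ℂ ξ).smulRight ξ

/-- An axiomatisation of the Hilbert space tensor product `G = E ⊗ E`:
a bilinear map `tmul` into `G` multiplying inner products and having dense span. -/
structure HilbertTensorProduct (E G : Type u) [NormedAddCommGroup E]
    [InnerProductSpace ℂ E] [NormedAddCommGroup G] [InnerProductSpace ℂ G] :
    Type u where
  tmul : E →ₗ[ℂ] E →ₗ[ℂ] G
  inner_tmul : ∀ a b c d : E, ⟪tmul a b, tmul c d⟫ = ⟪a, c⟫ * ⟪b, d⟫
  dense_span : Dense (↑(Submodule.span ℂ (Set.range fun z : E × E => tmul z.1 z.2)) : Set G)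

/-- The algebraic tensor product `E ⊗_alg E`, viewed as a (dense) subspace of `G`. -/
def HilbertTensorProduct.algSpan (J : HilbertTensorProduct E G) : Submodule ℂ G :=
  Submodule.span ℂ (Set.range fun z : E × E => J.tmul z.1 z.2)

/-- The Hilbert space tensor product together with the operator tensor product
`(x, y) ↦ x ⊗ y` on bounded operators. -/
structure OperatorTensor (E G : Type u) [NormedAddCommGroup E]
    [InnerProductSpace ℂ E] [NormedAddCommGroup G] [InnerProductSpace ℂ G]
    extends HilbertTensorProduct E G where
  op : (E →L[ℂ] E) → (E →L[ℂ] E) → (G →L[ℂ] G)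
  op_tmul : ∀ (x y : E →L[ℂ] E) (a b : E), op x y (tmul a b) = tmul (x a) (y b)

/-- The algebraic tensor product `K(𝔥) • K(𝔥)`: the span in `B(G)` of the
operators `x ⊗ y` with `x, y` compact. -/
def OperatorTensor.compactSpan (J : OperatorTensor E G) : Submodule ℂ (G →L[ℂ] G) :=
  Submodule.span ℂ {T | ∃ x y : E →L[ℂ] E,
    IsCompactOperator (⇑x) ∧ IsCompactOperator (⇑y) ∧ T = J.op x y}

/-- `β` is the linear functional on `K(𝔥) • K(𝔥)` induced by the bilinear form
`D`, i.e. `β (x ⊗ y) = D (x, y)` for compact `x, y`. -/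
def IsBetaFor (J : OperatorTensor E G)
    (D : (E →L[ℂ] E) →ₗ[ℂ] (E →L[ℂ] E) →ₗ[ℂ] ℂ)
    (β : ↥J.compactSpan →ₗ[ℂ] ℂ) : Prop :=
  ∀ x y : E →L[ℂ] E, IsCompactOperator (⇑x) → IsCompactOperator (⇑y) →
    ∀ hm : J.op x y ∈ J.compactSpan, β ⟨J.op x y, hm⟩ = D x y

/-- `β` is bounded for the operator norm (inherited from `B(G)`). -/
def BetaNormBounded (J : OperatorTensor E G) (β : ↥J.compactSpan →ₗ[ℂ] ℂ) : Prop :=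
  ∃ C : ℝ, ∀ S : J.compactSpan, ‖β S‖ ≤ C * ‖(S : G →L[ℂ] G)‖

/-- A decoherence functional is tensor bounded if its associated functional `β`
on `K(𝔥) • K(𝔥)` is bounded for the (pre-)C*-norm. -/
def IsTensorBounded (J : OperatorTensor E G)
    (d : (E →L[ℂ] E) → (E →L[ℂ] E) → ℂ) : Prop :=
  ∃ D, IsBoundedBilinear D ∧ ExtendsDF D d ∧
    ∃ β, IsBetaFor J D β ∧ BetaNormBounded J β

/-- `β` is uniformly bounded on the projections `p_ξ`, `ξ` a unit vector of the
algebraic tensor product `𝔥 ⊗_alg 𝔥`. -/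
def BetaTraciallyBounded (J : OperatorTensor E G) (β : ↥J.compactSpan →ₗ[ℂ] ℂ) : Prop :=
  ∃ C : ℝ, ∀ ξ : G, ξ ∈ J.toHilbertTensorProduct.algSpan → ‖ξ‖ = 1 →
    ∀ hm : rankOneProj ξ ∈ J.compactSpan, ‖β ⟨rankOneProj ξ, hm⟩‖ ≤ C

/-- A decoherence functional is tracially bounded if it is bounded and its
associated functional `β` is uniformly bounded on rank one projections `p_ξ`
with `ξ` a unit vector in `𝔥 ⊗_alg 𝔥`. -/
def IsTraciallyBounded (J : OperatorTensor E G)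
    (d : (E →L[ℂ] E) → (E →L[ℂ] E) → ℂ) : Prop :=
  DFBounded d ∧ ∃ D, IsBoundedBilinear D ∧ ExtendsDF D d ∧
    ∃ β, IsBetaFor J D β ∧ BetaTraciallyBounded J β

/-!
The form `(ξ, η) ↦ β(|η⟩⟨ξ|)` on the algebraic tensor product is sesquilinear, and tracial
boundedness says exactly that it is bounded on the diagonal of the unit sphere. By polarization and
the parallelogram law it is then bounded, so by density it is `⟪ξ, 𝔐 η⟫` for a bounded operator `𝔐`.
A finite rank projection is a sum of rank one projections, so the trace formula for all finite rank
projections amounts to `⟪a ⊗ b, 𝔐 (a ⊗ b)⟫ = d(p_a, p_b)` for unit vectors `a`, `b`. Polarizing in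
`a` and in `b` separately shows that these values determine `𝔐`.
-/

open InnerProductSpace

section SesquilinearForms

theorem sesqForm_polarization {V : Type*} [AddCommGroup V] [Module ℂ V]
    (f : V →ₗ⋆[ℂ] V →ₗ[ℂ] ℂ) (x y : V) :
    4 * f x y = f (x + y) (x + y) - f (x - y) (x - y)
      - Complex.I * f (x + Complex.I • y) (x + Complex.I • y)
      + Complex.I * f (x - Complex.I • y) (x - Complex.I • y) := by
  simp only [map_add, map_sub, LinearMap.add_apply, LinearMap.sub_apply, map_smulₛₗ,
    LinearMap.smul_apply, smul_eq_mul, Complex.conj_I, RingHom.id_apply]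
  linear_combination (2 * f x y - 2 * f y x) * Complex.I_sq

theorem norm_sesqForm_eq_mul_norm_normalize {𝕜 V : Type*} [RCLike 𝕜] [NormedAddCommGroup V]
    [NormedSpace 𝕜 V] (f : V →ₗ⋆[𝕜] V →ₗ[𝕜] 𝕜) (x y : V) :
    ‖f x y‖ = ‖x‖ * ‖y‖ * ‖f ((‖x‖⁻¹ : 𝕜) • x) ((‖y‖⁻¹ : 𝕜) • y)‖ := by
  rcases eq_or_ne x 0 with rfl | hx
  · simp
  rcases eq_or_ne y 0 with rfl | hy
  · simp
  have hx' : ‖x‖ ≠ 0 := norm_ne_zero_iff.2 hx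
  have hy' : ‖y‖ ≠ 0 := norm_ne_zero_iff.2 hy
  simp only [map_smulₛₗ, LinearMap.smul_apply, smul_eq_mul, norm_mul, RingHom.id_apply, map_inv₀,
    RCLike.conj_ofReal, norm_inv, RCLike.norm_ofReal, abs_norm]
  field_simp

theorem norm_sesqForm_diag_le_of_unit {𝕜 V : Type*} [RCLike 𝕜] [NormedAddCommGroup V]
    [NormedSpace 𝕜 V] {f : V →ₗ⋆[𝕜] V →ₗ[𝕜] 𝕜} {C : ℝ}
    (hf : ∀ x, ‖x‖ = 1 → ‖f x x‖ ≤ C) (x : V) :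
    ‖f x x‖ ≤ C * ‖x‖ ^ 2 := by
  rcases eq_or_ne x 0 with rfl | hx
  · simp
  rw [norm_sesqForm_eq_mul_norm_normalize, mul_comm C, sq]
  gcongr
  exact hf _ (norm_smul_inv_norm hx)

variable {V : Type*} [NormedAddCommGroup V] [InnerProductSpace ℂ V]
  {f : V →ₗ⋆[ℂ] V →ₗ[ℂ] ℂ} {C : ℝ}

theorem norm_sesqForm_le_add_sq_of_diag (hf : ∀ x, ‖f x x‖ ≤ C * ‖x‖ ^ 2) (x y : V) :
    ‖f x y‖ ≤ C * (‖x‖ ^ 2 + ‖y‖ ^ 2) := by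
  have hIy : ‖Complex.I • y‖ = ‖y‖ := by simp [norm_smul]
  have triangle : 4 * ‖f x y‖ ≤ ‖f (x + y) (x + y)‖ + ‖f (x - y) (x - y)‖
      + ‖f (x + Complex.I • y) (x + Complex.I • y)‖
      + ‖f (x - Complex.I • y) (x - Complex.I • y)‖ := by
    have norm_four_mul : ‖4 * f x y‖ = 4 * ‖f x y‖ := by simp
    rw [← norm_four_mul, sesqForm_polarization]
    refine (norm_add_le _ _).trans (add_le_add ((norm_sub_le _ _).trans
      (add_le_add (norm_sub_le _ _) ?_)) ?_) <;> simp
  have parallelogram := parallelogram_law_with_norm ℂ x y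
  have parallelogramI := parallelogram_law_with_norm ℂ x (Complex.I • y)
  rw [hIy] at parallelogramI
  linear_combination (triangle + hf (x + y) + hf (x - y) + hf (x + Complex.I • y)
    + hf (x - Complex.I • y) + C * parallelogram + C * parallelogramI) / 4

theorem norm_sesqForm_le_of_unit_diag (hf : ∀ x, ‖x‖ = 1 → ‖f x x‖ ≤ C) (x y : V) :
    ‖f x y‖ ≤ 2 * C * ‖x‖ * ‖y‖ := by
  rcases eq_or_ne x 0 with rfl | hx
  · simp
  rcases eq_or_ne y 0 with rfl | hy
  · simp
  have hunit := norm_sesqForm_le_add_sq_of_diag (norm_sesqForm_diag_le_of_unit hf)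
    ((‖x‖⁻¹ : ℂ) • x) ((‖y‖⁻¹ : ℂ) • y)
  have hx1 : ‖(‖x‖⁻¹ : ℂ) • x‖ = 1 := norm_smul_inv_norm hx
  have hy1 : ‖(‖y‖⁻¹ : ℂ) • y‖ = 1 := norm_smul_inv_norm hy
  rw [hx1, hy1] at hunit
  calc ‖f x y‖ = ‖x‖ * ‖y‖ * ‖f ((‖x‖⁻¹ : ℂ) • x) ((‖y‖⁻¹ : ℂ) • y)‖ :=
        norm_sesqForm_eq_mul_norm_normalize f x y
    _ ≤ ‖x‖ * ‖y‖ * (C * (1 ^ 2 + 1 ^ 2)) := by gcongr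
    _ = 2 * C * ‖x‖ * ‖y‖ := by ring

theorem sesqForm_eq_zero_of_unit_diag (hf : ∀ x, ‖x‖ = 1 → f x x = 0) : f = 0 := by
  ext x y
  simpa using norm_sesqForm_le_of_unit_diag (C := 0) (fun x hx => (norm_eq_zero.2 (hf x hx)).le) x y

theorem inner_map_map_eq_zero_of_unit_diag {W : Type*} [SeminormedAddCommGroup W]
    [InnerProductSpace ℂ W] {A B : V →ₗ[ℂ] W} (h : ∀ x, ‖x‖ = 1 → ⟪A x, B x⟫ = 0) (x y : V) :
    ⟪A x, B y⟫ = 0 :=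
  LinearMap.congr_fun₂ (sesqForm_eq_zero_of_unit_diag (f := ((innerₛₗ ℂ).comp A).compl₂ B) h) x y

theorem extend_subtypeL_apply {𝕜 𝕜₂ K F : Type*} [NontriviallyNormedField 𝕜]
    [NontriviallyNormedField 𝕜₂] {σ : 𝕜 →+* 𝕜₂} [NormedAddCommGroup K] [NormedSpace 𝕜 K]
    [NormedAddCommGroup F] [NormedSpace 𝕜₂ F] [CompleteSpace F] {S : Submodule 𝕜 K}
    (hS : Dense (S : Set K)) (T : S →SL[σ] F) (x : S) : T.extend S.subtypeL x = T x :=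
  T.extend_eq hS.denseRange_val isUniformEmbedding_subtype_val.isUniformInducing x

theorem exists_clm_inner_eq_of_dense {𝕜 K : Type*} [RCLike 𝕜] [NormedAddCommGroup K]
    [InnerProductSpace 𝕜 K] [CompleteSpace K] {S : Submodule 𝕜 K} (hS : Dense (S : Set K))
    (B : S →L⋆[𝕜] S →L[𝕜] 𝕜) : ∃ M : K →L[𝕜] K, ∀ x y : S, inner 𝕜 (x : K) (M y) = B x y := by
  let B' : K →L⋆[𝕜] K →L[𝕜] 𝕜 := ((B.extend S.subtypeL).flip.extend S.subtypeL).flip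
  refine ⟨(continuousLinearMapOfBilin B').adjoint, fun x y => ?_⟩
  rw [adjoint_inner_right, continuousLinearMapOfBilin_apply]
  simp only [B', flip_apply, extend_subtypeL_apply hS]

end SesquilinearForms

section RankOne

theorem isCompactOperator_rankOne {𝕜 V W : Type*} [RCLike 𝕜] [NormedAddCommGroup V]
    [InnerProductSpace 𝕜 V] [NormedAddCommGroup W] [NormedSpace 𝕜 W] (x : W) (y : V) :
    IsCompactOperator (rankOne 𝕜 x y) :=
  (isCompactOperator_of_locallyCompactSpace_dom (innerSL 𝕜 y)).clm_comp (.toSpanSingleton 𝕜 x)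

variable {H : Type*} [NormedAddCommGroup H] [InnerProductSpace ℂ H]

theorem rankOneProj_eq_rankOne (x : H) : rankOneProj x = rankOne ℂ x x := rfl

theorem hasFiniteRank_rankOneProj (x : H) : HasFiniteRank (rankOneProj x) := by
  refine Submodule.finiteDimensional_of_le (S₂ := Submodule.span ℂ {x}) ?_
  rintro _ ⟨y, rfl⟩
  exact Submodule.smul_mem _ _ (Submodule.mem_span_singleton_self x)

theorem isOrthoProj_rankOneProj [CompleteSpace H] {x : H} (hx : ‖x‖ = 1) :
    IsOrthoProj (rankOneProj x) :=
  let h := isStarProjection_rankOne_self (𝕜 := ℂ) hx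
  ⟨h.isIdempotentElem, h.isSelfAdjoint⟩

theorem IsOrthoProj.exists_eq_sum_rankOneProj [CompleteSpace H] {p : H →L[ℂ] H}
    (hp : IsOrthoProj p) (hfin : HasFiniteRank p) :
    ∃ (n : ℕ) (e : Fin n → H), Orthonormal ℂ e ∧ p = ∑ i, rankOneProj (e i) := by
  obtain ⟨_, hrange⟩ := isStarProjection_iff_eq_starProjection_range.1 ⟨hp.1, hp.2⟩
  have : FiniteDimensional ℂ p.range := hfin
  let e := stdOrthonormalBasis ℂ p.range
  exact ⟨_, fun i => e i, e.orthonormal.comp_linearIsometry p.range.subtypeₗᵢ,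
    hrange.trans e.starProjection_eq_sum_rankOne⟩

theorem hasSum_inner_mul_rankOne {ι : Type*} (b : HilbertBasis ι ℂ H) (M : H →L[ℂ] H) (x y : H) :
    HasSum (fun i => ⟪b i, (M * rankOne ℂ x y) (b i)⟫) ⟪y, M x⟫ :=
  (b.hasSum_inner_mul_inner y (M x)).congr_fun fun i => by
    rw [mul_apply_eq_comp, rankOne_apply, map_smul, inner_smul_right]

theorem traceAlong_mul_sum_rankOneProj {ι κ : Type*} (b : HilbertBasis ι ℂ H) (M : H →L[ℂ] H)
    (s : Finset κ) (x : κ → H) :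
    traceAlong b (M * ∑ k ∈ s, rankOneProj (x k)) = ∑ k ∈ s, ⟪x k, M (x k)⟫ := by
  refine HasSum.tsum_eq ?_
  simpa only [Finset.mul_sum, _root_.sum_apply, inner_sum, rankOneProj_eq_rankOne] using
    hasSum_sum fun k _ => hasSum_inner_mul_rankOne b M (x k) (x k)

end RankOne

section Tensor

variable {H K : Type u} [NormedAddCommGroup H] [InnerProductSpace ℂ H]
  [NormedAddCommGroup K] [InnerProductSpace ℂ K]

namespace HilbertTensorProduct

variable (J : HilbertTensorProduct H K)

theorem tmul_mem_algSpan (a b : H) : J.tmul a b ∈ J.algSpan :=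
  Submodule.subset_span ⟨(a, b), rfl⟩

variable {J}

theorem clm_ext {F : Type*} [NormedAddCommGroup F] [NormedSpace ℂ F] {S T : K →L[ℂ] F}
    (h : ∀ a b, S (J.tmul a b) = T (J.tmul a b)) : S = T := by
  refine ContinuousLinearMap.ext_on J.dense_span ?_
  rintro _ ⟨⟨a, b⟩, rfl⟩
  exact h a b

theorem eq_zero_of_inner_tmul_eq_zero {w : K} (h : ∀ a b, ⟪J.tmul a b, w⟫ = 0) : w = 0 :=
  innerSL_inj.1 <| J.clm_ext (T := innerSL ℂ 0) fun a b => by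
    simpa using inner_eq_zero_symm.1 (h a b)

theorem clm_eq_of_inner_tmul_self {M N : K →L[ℂ] K}
    (h : ∀ a b, ‖a‖ = 1 → ‖b‖ = 1 →
      ⟪J.tmul a b, M (J.tmul a b)⟫ = ⟪J.tmul a b, N (J.tmul a b)⟫) : M = N := by
  have polarize_left (b : H) (hb : ‖b‖ = 1) (a a' : H) :
      ⟪J.tmul a b, (M - N) (J.tmul a' b)⟫ = 0 :=
    inner_map_map_eq_zero_of_unit_diag (A := J.tmul.flip b)
      (B := (M - N : K →ₗ[ℂ] K) ∘ₗ J.tmul.flip b)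
      (fun a ha => by simp [inner_sub_right, h a b ha hb]) a a'
  have polarize_right (a a' b b' : H) : ⟪J.tmul a b, (M - N) (J.tmul a' b')⟫ = 0 :=
    inner_map_map_eq_zero_of_unit_diag (A := J.tmul a) (B := (M - N : K →ₗ[ℂ] K) ∘ₗ J.tmul a')
      (fun b hb => polarize_left b hb a a') b b'
  refine sub_eq_zero.1 (J.clm_ext fun a' b' => ?_)
  exact J.eq_zero_of_inner_tmul_eq_zero fun a b => polarize_right a a' b b'

end HilbertTensorProduct

namespace OperatorTensor

variable (J : OperatorTensor H K)

theorem op_rankOne (a b c e : H) :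
    J.op (rankOne ℂ a c) (rankOne ℂ b e) = rankOne ℂ (J.tmul a b) (J.tmul c e) :=
  J.clm_ext fun x y => by
    simp only [J.op_tmul, rankOne_apply, map_smul, LinearMap.smul_apply, J.inner_tmul, smul_smul,
      mul_comm]

theorem op_sum_sum {ι κ : Type*} (s : Finset ι) (t : Finset κ) (x : ι → H →L[ℂ] H)
    (y : κ → H →L[ℂ] H) :
    J.op (∑ i ∈ s, x i) (∑ j ∈ t, y j) = ∑ i ∈ s, ∑ j ∈ t, J.op (x i) (y j) :=
  J.clm_ext fun a b => by
    simp only [J.op_tmul, _root_.sum_apply, map_sum, LinearMap.sum_apply]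
    exact Finset.sum_comm

theorem traceAlong_mul_op_sum_rankOneProj {ι κ κ' : Type*} (b : HilbertBasis ι ℂ K)
    (M : K →L[ℂ] K) (s : Finset κ) (t : Finset κ') (x : κ → H) (y : κ' → H) :
    traceAlong b (M * J.op (∑ i ∈ s, rankOneProj (x i)) (∑ j ∈ t, rankOneProj (y j))) =
      ∑ i ∈ s, ∑ j ∈ t, ⟪J.tmul (x i) (y j), M (J.tmul (x i) (y j))⟫ := by
  simp only [op_sum_sum, rankOneProj_eq_rankOne, op_rankOne, ← Finset.sum_product']
  exact traceAlong_mul_sum_rankOneProj b M (s ×ˢ t) fun k => J.tmul (x k.1) (y k.2)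

theorem forall_eq_traceAlong_iff [CompleteSpace H] {ι : Type*} (b : HilbertBasis ι ℂ K)
    (D : (H →L[ℂ] H) →ₗ[ℂ] (H →L[ℂ] H) →ₗ[ℂ] ℂ) (M : K →L[ℂ] K) :
    (∀ p q, IsOrthoProj p → IsOrthoProj q → HasFiniteRank p → HasFiniteRank q →
      D p q = traceAlong b (M * J.op p q)) ↔
    ∀ x y, ‖x‖ = 1 → ‖y‖ = 1 →
      D (rankOneProj x) (rankOneProj y) = ⟪J.tmul x y, M (J.tmul x y)⟫ := by
  constructor
  · intro h x y hx hy
    rw [h _ _ (isOrthoProj_rankOneProj hx) (isOrthoProj_rankOneProj hy)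
      (hasFiniteRank_rankOneProj x) (hasFiniteRank_rankOneProj y)]
    simpa using J.traceAlong_mul_op_sum_rankOneProj b M {()} {()} (fun _ => x) fun _ => y
  · intro h p q hp hq hpfin hqfin
    obtain ⟨m, x, hx, rfl⟩ := hp.exists_eq_sum_rankOneProj hpfin
    obtain ⟨n, y, hy, rfl⟩ := hq.exists_eq_sum_rankOneProj hqfin
    simp only [J.traceAlong_mul_op_sum_rankOneProj, map_sum, LinearMap.sum_apply]
    rw [Finset.sum_comm]
    exact Finset.sum_congr rfl fun i _ => Finset.sum_congr rfl fun j _ =>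
      h (x i) (y j) (hx.1 i) (hy.1 j)

theorem rankOne_mem_compactSpan {x y : K} (hx : x ∈ J.algSpan) (hy : y ∈ J.algSpan) :
    rankOne ℂ x y ∈ J.compactSpan := by
  unfold HilbertTensorProduct.algSpan at hx hy
  induction hx, hy using Submodule.span_induction₂ with
  | mem_mem x y hx hy =>
    obtain ⟨⟨a, b⟩, rfl⟩ := hx
    obtain ⟨⟨c, e⟩, rfl⟩ := hy
    exact Submodule.subset_span ⟨rankOne ℂ a c, rankOne ℂ b e, isCompactOperator_rankOne a c,
      isCompactOperator_rankOne b e, (J.op_rankOne a b c e).symm⟩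
  | zero_left => simp
  | zero_right => simp
  | add_left x x' y _ _ _ h h' => simpa using add_mem h h'
  | add_right x y y' _ _ _ h h' => simpa using add_mem h h'
  | smul_left r x y _ _ h => simpa using J.compactSpan.smul_mem r h
  | smul_right r x y _ _ h => simpa using J.compactSpan.smul_mem (starRingEnd ℂ r) h

/-- The sesquilinear form `(x, y) ↦ β(|y⟩⟨x|)` on `𝔥 ⊗_alg 𝔥`, whose value at `(ξ, ξ)` is `β(p_ξ)`
for a unit vector `ξ`. -/
def rankOneForm (β : J.compactSpan →ₗ[ℂ] ℂ) : J.algSpan →ₗ⋆[ℂ] J.algSpan →ₗ[ℂ] ℂ :=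
  LinearMap.mk₂'ₛₗ _ _ (fun x y => β ⟨rankOne ℂ (y : K) (x : K), J.rankOne_mem_compactSpan y.2 x.2⟩)
    (fun x x' y => by rw [← map_add]; congr 1; ext1; simp)
    (fun c x y => by rw [← map_smul]; congr 1; ext1; simp)
    (fun x y y' => by rw [← map_add]; congr 1; ext1; simp)
    (fun c x y => by rw [← map_smul]; congr 1; ext1; simp)

end OperatorTensor

variable {J : OperatorTensor H K} {D : (H →L[ℂ] H) →ₗ[ℂ] (H →L[ℂ] H) →ₗ[ℂ] ℂ}
  {β : J.compactSpan →ₗ[ℂ] ℂ}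

theorem BetaTraciallyBounded.exists_inner_eq_rankOneForm [CompleteSpace K]
    (hβ : BetaTraciallyBounded J β) :
    ∃ M : K →L[ℂ] K, ∀ x y : J.algSpan, ⟪(x : K), M y⟫ = J.rankOneForm β x y := by
  obtain ⟨C, hC⟩ := hβ
  have hdiag (x : J.algSpan) (hx : ‖x‖ = 1) : ‖J.rankOneForm β x x‖ ≤ C :=
    hC x x.2 hx (J.rankOne_mem_compactSpan x.2 x.2)
  exact exists_clm_inner_eq_of_dense J.dense_span
    ((J.rankOneForm β).mkContinuous₂ (2 * C) (norm_sesqForm_le_of_unit_diag hdiag))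

theorem IsBetaFor.rankOneForm_tmul (hβ : IsBetaFor J D β) (a b c e : H) :
    J.rankOneForm β ⟨J.tmul a b, J.tmul_mem_algSpan a b⟩ ⟨J.tmul c e, J.tmul_mem_algSpan c e⟩ =
      D (rankOne ℂ c a) (rankOne ℂ e b) := by
  rw [← hβ _ _ (isCompactOperator_rankOne c a) (isCompactOperator_rankOne e b)
    (J.op_rankOne c e a b ▸
      J.rankOne_mem_compactSpan (J.tmul_mem_algSpan c e) (J.tmul_mem_algSpan a b))]
  simp only [J.op_rankOne]
  rfl

theorem stmt_12_general [CompleteSpace H] [CompleteSpace K]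
    {d : (H →L[ℂ] H) → (H →L[ℂ] H) → ℂ} (hext : ExtendsDF D d) (hβ : IsBetaFor J D β)
    (htb : BetaTraciallyBounded J β) {ι : Type*} (b : HilbertBasis ι ℂ K) :
    ∃! M : K →L[ℂ] K, ∀ p q : H →L[ℂ] H, IsOrthoProj p → IsOrthoProj q →
      HasFiniteRank p → HasFiniteRank q → d p q = traceAlong b (M * J.op p q) := by
  have trace_iff (M : K →L[ℂ] K) := J.forall_eq_traceAlong_iff b D M
  obtain ⟨M, hM⟩ := htb.exists_inner_eq_rankOneForm
  have hMprod (x y : H) :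
      D (rankOneProj x) (rankOneProj y) = ⟪J.tmul x y, M (J.tmul x y)⟫ :=
    (hβ.rankOneForm_tmul x y x y).symm.trans (hM ⟨_, J.tmul_mem_algSpan x y⟩ ⟨_, _⟩).symm
  refine ⟨M, fun p q hp hq hpfin hqfin => ?_,
    fun N hN => J.clm_eq_of_inner_tmul_self fun x y hx hy => ?_⟩
  · rw [← hext p q hp hq]
    exact (trace_iff M).2 (fun x y _ _ => hMprod x y) p q hp hq hpfin hqfin
  · have hN' := (trace_iff N).1 fun p q hp hq => hext p q hp hq ▸ hN p q hp hq
    exact (hN' x y hx hy).symm.trans (hMprod x y)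

end Tensor

/-- For a tracially bounded decoherence functional `d` on a
separable Hilbert space of dimension greater than two there is a unique bounded
operator `𝔐` on `𝔥 ⊗ 𝔥` with `d(p,q) = tr(𝔐 (p ⊗ q))` for all finite rank
projections `p, q`. -/
theorem stmt_12 [TopologicalSpace.SeparableSpace E] (hdim : 2 < Module.rank ℂ E)
    (d : (E →L[ℂ] E) → (E →L[ℂ] E) → ℂ) (hd : IsDecoherenceFunctional d)
    (J : OperatorTensor E G) (htb : IsTraciallyBounded J d)
    {ι : Type u} (bG : HilbertBasis ι ℂ G) :
    ∃! M : G →L[ℂ] G,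
      ∀ p q : E →L[ℂ] E, IsOrthoProj p → IsOrthoProj q →
        HasFiniteRank p → HasFiniteRank q →
        d p q = traceAlong bG (M * J.op p q) := by
  obtain ⟨-, D, -, hext, β, hβ, hbound⟩ := htb
  exact stmt_12_general hext hβ hbound bG
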